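/- Let k > 2. There exists a constant C depending only on k such that for all Schwartz functions f, g, h on ℝ³: | ⟨Q(g,f), h⟨v⟩^{2k}⟩ | ≤ C ( ‖g‖_{L¹₂} + ‖g‖_{L²₂} ) ‖f‖_{H²_{k−1}} ‖h‖_{L²_k}. -/

import Mathlib

/-!
The point is to write `Q(g,f)` in nondivergence form. With `A_ij = a_ij * g`, differentiating the
flux `A_ij ∂_j f - (a_ij * ∂_j g) f` gives
`A_ij ∂_ij f + (a_ij * ∂_i g) ∂_j f - (a_ij * ∂_j g) ∂_i f - (a_ij * ∂_ij g) f`; the two middle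
terms cancel because `a` is symmetric (`landauQ_eq`). Moreover `∂_i ∂_j a_ij = -c₀ δ₀`
(`sum_Aop_eq`), so that `Q(g,f) = A_ij ∂_ij f + c₀ g f`. This last identity is obtained by
regularizing: `a_ij = ∂_i ∂_j |z|` is replaced by `∂_i ∂_j √(ε² + |z|²)`, whose double divergence
is `-15 ε⁴ (ε² + |z|²)^{-7/2}`, an approximate Dirac mass.

For the first term, `|a(z)| ≤ 2/|z|` yields `|A_ij(v)| ≤ C ⟨v⟩⁻¹ (‖g‖_{L¹₂} + ‖g‖_{L²₂})`
(`Aop_bound`): for `|z| ≥ 1` by Peetre's inequality, for `|z| < 1` by the Cauchy-Schwarz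
inequality, since `|z|⁻¹` is locally square integrable. For the second term one needs the embedding
`|f(v)| ⟨v⟩^{k-1} ≤ C ‖f‖_{H²_{k-1}}` (`sobolev_bound`); it follows by applying
`c₀ φ = -a_ij * ∂_ij φ` to `φ = f` times a cutoff around `v`, and the same local square
integrability. Both terms are then closed by the weighted Cauchy-Schwarz inequality.
-/

open MeasureTheory Real Finset

noncomputable section

abbrev E3 := EuclideanSpace ℝ (Fin 3)

/-- The Japanese bracket `⟨v⟩ = √(1+|v|²)`. -/
def jap (v : E3) : ℝ := Real.sqrt (1 + ‖v‖ ^ 2)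

/-- The projection matrix `Π(z)` with entries `δ_ij − z_i z_j / |z|²`. -/
def Pi3 (z : E3) : Matrix (Fin 3) (Fin 3) ℝ :=
  Matrix.of fun i j => (if i = j then (1 : ℝ) else 0) - z i * z j / ‖z‖ ^ 2

/-- The Coulomb Landau kernel `a(z) = |z|⁻¹ Π(z)`. -/
def aK (z : E3) : Matrix (Fin 3) (Fin 3) ℝ :=
  Matrix.of fun i j => ‖z‖⁻¹ * Pi3 z i j

/-- Partial derivative `∂_i f`. -/
def pd (i : Fin 3) (f : E3 → ℝ) : E3 → ℝ :=
  fun v => fderiv ℝ f v (EuclideanSpace.single i 1)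

/-- The Landau collision operator with Coulomb potential:
`Q(g,h)(v) = ∇_v · ∫ a(v−v*) ( g(v*) ∇h(v) − ∇g(v*) h(v) ) dv*`. -/
def landauQ (g h : E3 → ℝ) : E3 → ℝ := fun v =>
  ∑ i : Fin 3, fderiv ℝ (fun w =>
      ∫ vs : E3, ∑ j : Fin 3, aK (w - vs) i j * (g vs * pd j h w - pd j g vs * h w)) v
    (EuclideanSpace.single i 1)

/-- The pairing `⟨f,g⟩ = ∫ f g dv`. -/
def pairL (f g : E3 → ℝ) : ℝ := ∫ v : E3, f v * g v

/-- Weighted Lebesgue norm `‖f‖_{L^p_l} = (∫ |f|^p ⟨v⟩^{lp})^{1/p}`. -/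
def Lpl (p l : ℝ) (f : E3 → ℝ) : ℝ :=
  (∫ v : E3, |f v| ^ p * jap v ^ (l * p)) ^ (1 / p)

/-- Iterated partial derivative in direction `i`. -/
def pdPow (i : Fin 3) : ℕ → (E3 → ℝ) → E3 → ℝ
  | 0, f => f
  | n + 1, f => pd i (pdPow i n f)

/-- Multi-index partial derivative `∂^m f`. -/
def pdM (m : Fin 3 → ℕ) (f : E3 → ℝ) : E3 → ℝ :=
  pdPow 0 (m 0) (pdPow 1 (m 1) (pdPow 2 (m 2) f))

/-- Multi-indices `m` with `|m| ≤ n`. -/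
def multiIdx (n : ℕ) : Finset (Fin 3 → ℕ) :=
  (Fintype.piFinset fun _ : Fin 3 => Finset.range (n + 1)).filter fun m => (∑ i, m i) ≤ n

/-- Square of the weighted Sobolev norm `‖f‖²_{H^n_l} = Σ_{|m|≤n} ‖∂^m f‖²_{L²_l}`. -/
def HSobSq (n : ℕ) (l : ℝ) (f : E3 → ℝ) : ℝ :=
  ∑ m ∈ multiIdx n, (Lpl 2 l (pdM m f)) ^ 2

/-- Weighted Sobolev norm `‖f‖_{H^n_l}`. -/
def HSob (n : ℕ) (l : ℝ) (f : E3 → ℝ) : ℝ :=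
  Real.sqrt (HSobSq n l f)

/-- Rotational derivative `(v_i ∂_j − v_j ∂_i) f`. -/
def rotD (i j : Fin 3) (f : E3 → ℝ) : E3 → ℝ :=
  fun v => v i * pd j f v - v j * pd i f v

/-- Square of the anisotropic norm
`‖f‖²_{𝖧¹_A} = Σ_{i<j} ‖(v_i ∂_j − v_j ∂_i) f‖²_{L²_{−3/2}} + ‖f‖²_{H¹_{−3/2}}`. -/
def HAsq (f : E3 → ℝ) : ℝ :=
  (∑ p ∈ Finset.univ.filter (fun p : Fin 3 × Fin 3 => p.1 < p.2),
    (Lpl 2 (-(3/2)) (rotD p.1 p.2 f)) ^ 2) + HSobSq 1 (-(3/2)) f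

/-- The anisotropic norm `‖f‖_{𝖧¹_A}`. -/
def HA (f : E3 → ℝ) : ℝ := Real.sqrt (HAsq f)

end


open scoped LineDeriv Topology

namespace LandauBound

/-! ### Weights and Schwartz functions -/

/-- The partial derivative `∂_i`, as a Schwartz function. -/
noncomputable def dS (i : Fin 3) (f : SchwartzMap E3 ℝ) : SchwartzMap E3 ℝ :=
  ∂_{(EuclideanSpace.single i 1 : E3)} f

lemma coe_dS (i : Fin 3) (f : SchwartzMap E3 ℝ) : ⇑(dS i f) = pd i ⇑f := by
  ext x
  exact SchwartzMap.lineDerivOp_apply_eq_fderiv _ _ _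

lemma jap_sq (v : E3) : jap v ^ 2 = 1 + ‖v‖ ^ 2 := by
  unfold jap
  rw [Real.sq_sqrt (by positivity)]

lemma one_le_jap (v : E3) : 1 ≤ jap v := by
  unfold jap
  rw [Real.one_le_sqrt]
  nlinarith [sq_nonneg ‖v‖]

lemma jap_pos (v : E3) : 0 < jap v := lt_of_lt_of_le one_pos (one_le_jap v)

lemma jap_le (v : E3) : jap v ≤ 1 + ‖v‖ := by
  have := norm_nonneg v
  refine abs_le_of_sq_le_sq' ?_ (by positivity) |>.2
  rw [jap_sq]; nlinarith

lemma continuous_jap : Continuous jap := by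
  unfold jap; fun_prop

lemma continuous_jap_rpow (l : ℝ) : Continuous (fun v => jap v ^ l) :=
  continuous_jap.rpow_const fun v => Or.inl (jap_pos v).ne'

/-- Brackets at distance at most `1` are comparable. -/
lemma jap_le_two_mul {v z : E3} (hz : ‖z‖ ≤ 1) : jap v ≤ 2 * jap (v - z) := by
  have h1 := jap_pos (v - z)
  refine abs_le_of_sq_le_sq' ?_ (by positivity) |>.2
  rw [mul_pow, jap_sq, jap_sq]
  have h2 : ‖v‖ ≤ ‖v - z‖ + ‖z‖ := by simpa using norm_add_le (v - z) z
  have := norm_nonneg v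
  have := norm_nonneg (v - z)
  have h3 : ‖v‖ ^ 2 ≤ (‖v - z‖ + 1) ^ 2 := by gcongr; linarith
  nlinarith [sq_nonneg (‖v - z‖ - 1)]

/-- Peetre's inequality away from the diagonal. -/
lemma jap_le_two_mul_mul {v z : E3} (hz : 1 ≤ ‖z‖) : jap v ≤ 2 * (jap (v - z) * ‖z‖) := by
  have h1 := jap_pos (v - z)
  refine abs_le_of_sq_le_sq' ?_ (by positivity) |>.2
  rw [mul_pow, mul_pow, jap_sq, jap_sq]
  have h2 : ‖v‖ ≤ ‖v - z‖ + ‖z‖ := by simpa using norm_add_le (v - z) z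
  have := norm_nonneg v
  have := norm_nonneg (v - z)
  have h3 : ‖v‖ ^ 2 ≤ (‖v - z‖ + ‖z‖) ^ 2 := by gcongr
  have h4 : 1 ≤ ‖z‖ ^ 2 := by nlinarith
  have h5 : 0 ≤ (‖z‖ ^ 2 - 1) * ‖v - z‖ ^ 2 := mul_nonneg (by linarith) (by positivity)
  nlinarith [sq_nonneg (‖v - z‖ - ‖z‖)]

lemma exists_decay (u : SchwartzMap E3 ℝ) (l : ℝ) :
    ∃ C, 0 ≤ C ∧ ∀ v, |u v| * jap v ^ l ≤ C := by
  obtain ⟨n, hn⟩ := exists_nat_ge l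
  refine ⟨2 ^ n * ((Finset.Iic (n, 0)).sup fun m => SchwartzMap.seminorm ℝ m.1 m.2) u,
    by positivity, fun v => ?_⟩
  have h := SchwartzMap.one_add_le_sup_seminorm_apply (𝕜 := ℝ) (m := (n, 0)) (k := n) (n := 0)
    le_rfl le_rfl u v
  rw [norm_iteratedFDeriv_zero, Real.norm_eq_abs] at h
  refine le_trans ?_ h
  rw [mul_comm]
  gcongr
  calc jap v ^ l ≤ jap v ^ (n : ℝ) := Real.rpow_le_rpow_of_exponent_le (one_le_jap v) hn
    _ = jap v ^ n := Real.rpow_natCast _ _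
    _ ≤ (1 + ‖v‖) ^ n := pow_le_pow_left₀ (jap_pos v).le (jap_le v) n

lemma integrable_jap : Integrable (fun v : E3 => jap v ^ (-4 : ℝ)) := by
  have h := integrable_rpow_neg_one_add_norm_sq (E := E3) (μ := volume) (r := 4)
    (by simp; norm_num)
  refine h.congr (ae_of_all _ fun v => ?_)
  simp only [jap, Real.sqrt_eq_rpow]
  rw [← Real.rpow_mul (by positivity)]
  norm_num

lemma continuous_weight (u : SchwartzMap E3 ℝ) (l : ℝ) :
    Continuous (fun v => |u v| * jap v ^ l) :=
  u.continuous.abs.mul (continuous_jap_rpow l)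

lemma weight_nonneg (u : SchwartzMap E3 ℝ) (l : ℝ) (v : E3) : 0 ≤ |u v| * jap v ^ l :=
  mul_nonneg (abs_nonneg _) (Real.rpow_nonneg (jap_pos v).le _)

lemma integrable_weight (u : SchwartzMap E3 ℝ) (l : ℝ) :
    Integrable (fun v => |u v| * jap v ^ l) := by
  obtain ⟨C, hC, h⟩ := exists_decay u (l + 4)
  refine (integrable_jap.const_mul C).mono' (continuous_weight u l).aestronglyMeasurable
    (ae_of_all _ fun v => ?_)
  rw [Real.norm_of_nonneg (weight_nonneg u l v)]
  have h4 := h v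
  have hp := Real.rpow_pos_of_pos (jap_pos v) (-4)
  calc |u v| * jap v ^ l = (|u v| * jap v ^ (l + 4)) * jap v ^ (-4 : ℝ) := by
        rw [mul_assoc, ← Real.rpow_add (jap_pos v)]; ring_nf
    _ ≤ _ := by gcongr

lemma memLp_weight (u : SchwartzMap E3 ℝ) (l : ℝ) :
    MemLp (fun v => |u v| * jap v ^ l) 2 := by
  rw [memLp_two_iff_integrable_sq (continuous_weight u l).aestronglyMeasurable]
  obtain ⟨C, hC, h⟩ := exists_decay u l
  refine ((integrable_weight u l).const_mul C).mono'
    ((continuous_weight u l).pow 2).aestronglyMeasurable (ae_of_all _ fun v => ?_)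
  rw [Real.norm_of_nonneg (by positivity), sq]
  exact mul_le_mul_of_nonneg_right (h v) (weight_nonneg u l v)

lemma Lpl_two (l : ℝ) (u : E3 → ℝ) :
    Lpl 2 l u = √(∫ v, (|u v| * jap v ^ l) ^ 2) := by
  unfold Lpl
  rw [Real.sqrt_eq_rpow]
  congr 1
  refine integral_congr_ae (ae_of_all _ fun v => ?_)
  simp only
  rw [mul_pow, Real.rpow_mul (jap_pos v).le, Real.rpow_two, Real.rpow_two]

lemma Lpl_one (l : ℝ) (u : E3 → ℝ) :
    Lpl 1 l u = ∫ v, |u v| * jap v ^ l := by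
  unfold Lpl
  simp

lemma Lpl_nonneg (p l : ℝ) (u : E3 → ℝ) : 0 ≤ Lpl p l u :=
  Real.rpow_nonneg (integral_nonneg fun v =>
    mul_nonneg (Real.rpow_nonneg (abs_nonneg _) _) (Real.rpow_nonneg (jap_pos v).le _)) _

lemma cauchy_schwarz {μ : Measure E3} {F G : E3 → ℝ} (hF0 : ∀ x, 0 ≤ F x) (hG0 : ∀ x, 0 ≤ G x)
    (hF : MemLp F 2 μ) (hG : MemLp G 2 μ) :
    ∫ x, F x * G x ∂μ ≤ √(∫ x, F x ^ 2 ∂μ) * √(∫ x, G x ^ 2 ∂μ) := by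
  have h := integral_mul_le_Lp_mul_Lq_of_nonneg (μ := μ) Real.HolderConjugate.two_two
    (ae_of_all _ hF0) (ae_of_all _ hG0) (by simpa using hF) (by simpa using hG)
  simpa [Real.sqrt_eq_rpow] using h

/-! ### The Coulomb kernel and its convolutions -/

lemma abs_coord_le (z : E3) (i : Fin 3) : |z i| ≤ ‖z‖ := by
  simpa using PiLp.norm_apply_le z i

lemma abs_aK_le (z : E3) (i j : Fin 3) : |aK z i j| ≤ 2 * ‖z‖⁻¹ := by
  have h1 : |z i * z j / ‖z‖ ^ 2| ≤ 1 := by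
    rw [abs_div, abs_mul, abs_of_nonneg (sq_nonneg ‖z‖)]
    refine div_le_one_of_le₀ ?_ (by positivity)
    rw [sq]
    exact mul_le_mul (abs_coord_le z i) (abs_coord_le z j) (abs_nonneg _) (norm_nonneg _)
  have h2 : |(if i = j then (1 : ℝ) else 0)| ≤ 1 := by split_ifs <;> simp
  simp only [aK, Pi3, Matrix.of_apply]
  rw [abs_mul, abs_of_nonneg (inv_nonneg.2 (norm_nonneg z)), mul_comm]
  gcongr
  exact (abs_sub _ _).trans (by linarith)

lemma aK_symm (z : E3) (i j : Fin 3) : aK z i j = aK z j i := by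
  simp only [aK, Pi3, Matrix.of_apply, eq_comm (a := i), mul_comm (z i)]

lemma measurable_coord (i : Fin 3) : Measurable (fun z : E3 => z i) :=
  (EuclideanSpace.proj (𝕜 := ℝ) i).continuous.measurable

lemma measurable_aK (i j : Fin 3) : Measurable (fun z => aK z i j) := by
  simp only [aK, Pi3, Matrix.of_apply]
  exact measurable_norm.inv.mul (measurable_const.sub
    (((measurable_coord i).mul (measurable_coord j)).div (measurable_norm.pow_const 2)))

lemma integrable_majorant :
    Integrable (fun z : E3 => ‖z‖⁻¹ * ((1 + ‖z‖) ^ 4)⁻¹) := by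
  refine (integrable_fun_norm_addHaar (E := E3) volume
    (f := fun r : ℝ => r⁻¹ * ((1 + r) ^ 4)⁻¹)).2 ?_
  have h := (integrable_one_add_norm (E := ℝ) (μ := volume) (r := 2) (by simp)).integrableOn
    (s := Set.Ioi 0)
  refine h.mono' (by fun_prop) ?_
  refine (ae_restrict_iff' measurableSet_Ioi).2 (ae_of_all _ fun r (hr : 0 < r) => ?_)
  rw [Real.norm_of_nonneg (by simp; positivity), Real.norm_of_nonneg hr.le,
    Real.rpow_neg (by positivity), Real.rpow_two]
  have : Module.finrank ℝ E3 - 1 = 2 := by simp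
  rw [this, smul_eq_mul]
  have e : r ^ 2 * (r⁻¹ * ((1 + r) ^ 4)⁻¹) = r / (1 + r) ^ 4 := by field_simp
  rw [e, div_le_iff₀ (by positivity)]
  have e2 : ((1 + r) ^ 2)⁻¹ * (1 + r) ^ 4 = (1 + r) ^ 2 := by field_simp
  rw [e2]
  nlinarith

lemma integrableOn_inv_norm_sq :
    IntegrableOn (fun z : E3 => (‖z‖⁻¹) ^ 2) (Metric.ball 0 1) := by
  refine (integrableOn_fun_norm_addHaar (E := E3) volume
    (f := fun r : ℝ => (r⁻¹) ^ 2)).2 ?_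
  have : Module.finrank ℝ E3 - 1 = 2 := by simp
  rw [this]
  have h : IntegrableOn (fun _ : ℝ => (1 : ℝ)) (Set.Ioo 0 1) := by simp
  refine h.congr_fun (fun r hr => ?_) measurableSet_Ioo
  have := hr.1.ne'
  simp only [smul_eq_mul]
  field_simp

section
variable {F : Type*} [NormedAddCommGroup F] [NormedSpace ℝ F]

/-- Rapid decay of `u(w - ·)`, uniformly for `w` in a ball. -/
lemma shifted_bound (u : SchwartzMap E3 F) (w₀ : E3) :
    ∃ C, 0 ≤ C ∧ ∀ w ∈ Metric.ball w₀ 1, ∀ z, ‖u (w - z)‖ ≤ C * ((1 + ‖z‖) ^ 4)⁻¹ := by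
  set C₀ := 2 ^ 4 * ((Finset.Iic (4, 0)).sup fun m => SchwartzMap.seminorm ℝ m.1 m.2) u with hC₀
  have hC : 0 ≤ C₀ := by positivity
  refine ⟨C₀ * (2 + ‖w₀‖) ^ 4, by positivity, fun w hw z => ?_⟩
  have h := SchwartzMap.one_add_le_sup_seminorm_apply (𝕜 := ℝ) (m := (4, 0)) (k := 4) (n := 0)
    le_rfl le_rfl u (w - z)
  rw [norm_iteratedFDeriv_zero, ← hC₀] at h
  rw [mem_ball_iff_norm] at hw
  have h1 : 1 + ‖z‖ ≤ (2 + ‖w₀‖) * (1 + ‖w - z‖) := by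
    have h2 : ‖z‖ ≤ ‖w‖ + ‖w - z‖ := by
      have := norm_sub_le w (w - z)
      simpa using this
    have h3 : ‖w‖ ≤ ‖w - w₀‖ + ‖w₀‖ := by simpa using norm_add_le (w - w₀) w₀
    nlinarith [norm_nonneg w₀, norm_nonneg (w - z), mul_nonneg (norm_nonneg w₀) (norm_nonneg (w - z))]
  have h5 : (1 + ‖z‖) ^ 4 ≤ (2 + ‖w₀‖) ^ 4 * (1 + ‖w - z‖) ^ 4 := by
    rw [← mul_pow]; gcongr
  rw [← div_eq_mul_inv, le_div_iff₀ (by positivity)]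
  calc ‖u (w - z)‖ * (1 + ‖z‖) ^ 4
      ≤ ‖u (w - z)‖ * ((2 + ‖w₀‖) ^ 4 * (1 + ‖w - z‖) ^ 4) := by gcongr
    _ = ((1 + ‖w - z‖) ^ 4 * ‖u (w - z)‖) * (2 + ‖w₀‖) ^ 4 := by ring
    _ ≤ _ := by gcongr

lemma aestronglyMeasurable_kernel (u : SchwartzMap E3 F) (w : E3) (i j : Fin 3) :
    AEStronglyMeasurable (fun z => aK z i j • u (w - z)) :=
  (measurable_aK i j).aestronglyMeasurable.smul
    (u.continuous.comp (continuous_const.sub continuous_id)).aestronglyMeasurable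

lemma norm_kernel_le {u : SchwartzMap E3 F} {w z : E3} {C : ℝ} {i j : Fin 3}
    (h : ‖u (w - z)‖ ≤ C * ((1 + ‖z‖) ^ 4)⁻¹) :
    ‖aK z i j • u (w - z)‖ ≤ 2 * C * (‖z‖⁻¹ * ((1 + ‖z‖) ^ 4)⁻¹) := by
  rw [norm_smul, Real.norm_eq_abs]
  calc _ ≤ (2 * ‖z‖⁻¹) * (C * ((1 + ‖z‖) ^ 4)⁻¹) :=
        mul_le_mul (abs_aK_le z i j) h (norm_nonneg _) (by positivity)
    _ = _ := by ring

lemma integrable_kernel (u : SchwartzMap E3 F) (w : E3) (i j : Fin 3) :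
    Integrable (fun z => aK z i j • u (w - z)) := by
  obtain ⟨C, hC, h⟩ := shifted_bound u w
  refine (integrable_majorant.const_mul (2 * C)).mono' (aestronglyMeasurable_kernel u w i j)
    (ae_of_all _ fun z => norm_kernel_le (h w (Metric.mem_ball_self one_pos) z))

end

/-- The convolution `a_ij * u`. -/
noncomputable def Aop (i j : Fin 3) (u : SchwartzMap E3 ℝ) (w : E3) : ℝ :=
  ∫ z, aK z i j * u (w - z)

lemma integrable_kernel_mul (u : SchwartzMap E3 ℝ) (w : E3) (i j : Fin 3) :
    Integrable (fun z => aK z i j * u (w - z)) :=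
  integrable_kernel u w i j

lemma hasFDerivAt_Aop (i j : Fin 3) (u : SchwartzMap E3 ℝ) (w : E3) :
    HasFDerivAt (Aop i j u)
      (∫ z, aK z i j • (SchwartzMap.fderivCLM ℝ E3 ℝ u) (w - z)) w := by
  obtain ⟨C, hC, h⟩ := shifted_bound (SchwartzMap.fderivCLM ℝ E3 ℝ u) w
  refine hasFDerivAt_integral_of_dominated_of_fderiv_le
    (F' := fun w z => aK z i j • (SchwartzMap.fderivCLM ℝ E3 ℝ u) (w - z))
    (bound := fun z => 2 * C * (‖z‖⁻¹ * ((1 + ‖z‖) ^ 4)⁻¹))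
    (Metric.ball_mem_nhds w one_pos) ?_ (integrable_kernel_mul u w i j)
    (aestronglyMeasurable_kernel _ w i j) ?_ (integrable_majorant.const_mul (2 * C)) ?_
  · exact Filter.Eventually.of_forall fun x => (integrable_kernel_mul u x i j).aestronglyMeasurable
  · exact ae_of_all _ fun z x hx => norm_kernel_le (h x hx z)
  · refine ae_of_all _ fun z x _ => ?_
    have h1 : HasFDerivAt u (fderiv ℝ u (x - z)) (x - z) := u.differentiableAt.hasFDerivAt
    have h2 := h1.comp x ((hasFDerivAt_id x).sub_const z)
    exact h2.const_smul (aK z i j)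

lemma pd_Aop (i j m : Fin 3) (u : SchwartzMap E3 ℝ) :
    pd m (Aop i j u) = Aop i j (dS m u) := by
  ext w
  unfold pd
  rw [(hasFDerivAt_Aop i j u w).fderiv, ContinuousLinearMap.integral_apply
    (integrable_kernel (SchwartzMap.fderivCLM ℝ E3 ℝ u) w i j)]
  rfl

lemma Aop_symm (i j : Fin 3) (u : SchwartzMap E3 ℝ) : Aop i j u = Aop j i u := by
  ext w
  simp only [Aop, aK_symm _ i j]

/-- The flux in the definition of `Q(g,f)`, in terms of convolutions. -/
lemma flux_eq (f g : SchwartzMap E3 ℝ) (i : Fin 3) (w : E3) :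
    ∫ vs : E3, ∑ j : Fin 3, aK (w - vs) i j * (g vs * pd j f w - pd j g vs * f w)
      = ∑ j : Fin 3, (Aop i j g w * dS j f w - Aop i j (dS j g) w * f w) := by
  rw [← integral_sub_left_eq_self (μ := volume)
    (fun vs : E3 => ∑ j : Fin 3, aK (w - vs) i j * (g vs * pd j f w - pd j g vs * f w)) w]
  simp only [sub_sub_cancel, ← coe_dS]
  have hA : ∀ j, Integrable (fun z => aK z i j * g (w - z) * dS j f w) := fun j =>
    (integrable_kernel_mul g w i j).mul_const _
  have hB : ∀ j, Integrable (fun z => aK z i j * dS j g (w - z) * f w) := fun j =>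
    (integrable_kernel_mul (dS j g) w i j).mul_const _
  simp only [mul_sub, ← mul_assoc]
  refine (integral_finsetSum _ fun j _ => (hA j).sub (hB j)).trans ?_
  refine Finset.sum_congr rfl fun j _ => ?_
  refine (integral_sub (hA j) (hB j)).trans ?_
  rw [integral_mul_const, integral_mul_const]
  rfl

/-- Nondivergence form of the collision operator. The first-order terms cancel because the kernel
is symmetric. -/
lemma landauQ_eq (f g : SchwartzMap E3 ℝ) (v : E3) :
    landauQ g f v = (∑ i : Fin 3, ∑ j : Fin 3, Aop i j g v * dS i (dS j f) v)
      - (∑ i : Fin 3, ∑ j : Fin 3, Aop i j (dS i (dS j g)) v) * f v := by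
  unfold landauQ
  have key : ∀ i : Fin 3, fderiv ℝ (fun w =>
      ∫ vs : E3, ∑ j : Fin 3, aK (w - vs) i j * (g vs * pd j f w - pd j g vs * f w)) v
        (EuclideanSpace.single i 1)
      = ∑ j : Fin 3, ((Aop i j g v * dS i (dS j f) v + Aop i j (dS i g) v * dS j f v)
        - (Aop i j (dS j g) v * dS i f v + Aop i j (dS i (dS j g)) v * f v)) := by
    intro i
    simp only [flux_eq]
    have hA : ∀ j u, HasFDerivAt (Aop i j u) (fderiv ℝ (Aop i j u) v) v := fun j u =>
      (hasFDerivAt_Aop i j u v).differentiableAt.hasFDerivAt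
    have hS : ∀ u : SchwartzMap E3 ℝ, HasFDerivAt u (fderiv ℝ u v) v := fun u =>
      u.differentiableAt.hasFDerivAt
    have hd : ∀ j u, fderiv ℝ (Aop i j u) v (EuclideanSpace.single i 1) = Aop i j (dS i u) v :=
      fun j u => congrFun (pd_Aop i j i u) v
    have hs : ∀ u : SchwartzMap E3 ℝ, fderiv ℝ u v (EuclideanSpace.single i 1) = dS i u v :=
      fun u => congrFun (coe_dS i u).symm v
    have := HasFDerivAt.fun_sum (u := Finset.univ) (fun j _ =>
      ((hA j g).mul (hS (dS j f))).sub ((hA j (dS j g)).mul (hS f)))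
    refine (congrArg (fun L : E3 →L[ℝ] ℝ => L (EuclideanSpace.single i 1)) this.fderiv).trans ?_
    simp only [_root_.sum_apply, _root_.sub_apply, _root_.add_apply,
      _root_.smul_apply, smul_eq_mul, hd, hs]
    refine Finset.sum_congr rfl fun j _ => ?_
    ring
  simp only [key]
  have hc : ∑ i : Fin 3, ∑ j : Fin 3, Aop i j (dS i g) v * dS j f v
      = ∑ i : Fin 3, ∑ j : Fin 3, Aop i j (dS j g) v * dS i f v := by
    rw [Finset.sum_comm]
    exact Finset.sum_congr rfl fun i _ => Finset.sum_congr rfl fun j _ => by rw [Aop_symm]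
  simp only [Finset.sum_sub_distrib, Finset.sum_add_distrib, hc, Finset.sum_mul]
  ring

/-! ### The fundamental solution identity `∂_i ∂_j a_ij = -c δ₀` -/

/-- The regularization `(ε² + |z|²)^{-1/2}` of `|z|⁻¹`. -/
noncomputable def qf (ε : ℝ) (z : E3) : ℝ := (√(ε ^ 2 + ‖z‖ ^ 2))⁻¹

/-- The regularization `∂_i ∂_j √(ε² + |z|²)` of the kernel `a_ij(z) = ∂_i ∂_j |z|`. -/
noncomputable def aE (ε : ℝ) (i j : Fin 3) (z : E3) : ℝ :=
  (if i = j then 1 else 0) * qf ε z - (z i * qf ε z) * (z j * qf ε z) * qf ε z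

lemma qf_nonneg (ε : ℝ) (z : E3) : 0 ≤ qf ε z := inv_nonneg.2 (Real.sqrt_nonneg _)

lemma qf_sq {ε : ℝ} (hε : 0 < ε) (z : E3) : qf ε z ^ 2 * (ε ^ 2 + ‖z‖ ^ 2) = 1 := by
  unfold qf
  rw [inv_pow, Real.sq_sqrt (by positivity)]
  exact inv_mul_cancel₀ (by positivity)

lemma norm_mul_qf_le {ε : ℝ} (hε : 0 < ε) (z : E3) : ‖z‖ * qf ε z ≤ 1 := by
  have h := qf_sq hε z
  have h1 : (‖z‖ * qf ε z) ^ 2 ≤ 1 := by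
    rw [mul_pow]
    nlinarith [sq_nonneg (qf ε z), sq_nonneg (ε * qf ε z)]
  exact (abs_le_of_sq_le_sq' (by simpa using h1) zero_le_one).2

lemma abs_coord_mul_qf_le {ε : ℝ} (hε : 0 < ε) (i : Fin 3) (z : E3) : |z i * qf ε z| ≤ 1 := by
  rw [abs_mul, abs_of_nonneg (qf_nonneg ε z)]
  exact (mul_le_mul_of_nonneg_right (abs_coord_le z i) (qf_nonneg ε z)).trans (norm_mul_qf_le hε z)

lemma qf_le {ε : ℝ} (hε : 0 < ε) (z : E3) : qf ε z ≤ ε⁻¹ := by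
  unfold qf
  gcongr
  exact Real.le_sqrt_of_sq_le (by nlinarith [sq_nonneg ‖z‖])

lemma continuous_qf {ε : ℝ} (hε : 0 < ε) : Continuous (qf ε) := by
  unfold qf
  refine Continuous.inv₀ (by fun_prop) fun z => ?_
  positivity

lemma continuous_coord (i : Fin 3) : Continuous (fun z : E3 => z i) :=
  (EuclideanSpace.proj (𝕜 := ℝ) i).continuous

open scoped BoundedContinuousFunction

/-- `qf ε` as a bounded continuous function. -/
noncomputable def qB {ε : ℝ} (hε : 0 < ε) : E3 →ᵇ ℝ :=
  BoundedContinuousFunction.ofNormedAddCommGroup (qf ε) (continuous_qf hε) ε⁻¹ fun z => by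
    rw [Real.norm_of_nonneg (qf_nonneg ε z)]; exact qf_le hε z

/-- `z_i (ε² + |z|²)^{-1/2}` as a bounded continuous function. -/
noncomputable def pB {ε : ℝ} (hε : 0 < ε) (i : Fin 3) : E3 →ᵇ ℝ :=
  BoundedContinuousFunction.ofNormedAddCommGroup (fun z : E3 => z i * qf ε z)
    ((continuous_coord i).mul (continuous_qf hε)) 1 (abs_coord_mul_qf_le hε i)

lemma qB_apply {ε : ℝ} (hε : 0 < ε) (z : E3) : qB hε z = qf ε z := rfl

lemma pB_apply {ε : ℝ} (hε : 0 < ε) (i : Fin 3) (z : E3) : pB hε i z = z i * qf ε z := rfl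

/-- `K'` is the partial derivative `∂_i K`, both bounded and continuous. -/
def IsPd (i : Fin 3) (K K' : E3 →ᵇ ℝ) : Prop :=
  ∀ z, HasLineDerivAt ℝ K (K' z) z (EuclideanSpace.single i 1)

lemma IsPd.mul {i : Fin 3} {K K' L L' : E3 →ᵇ ℝ} (hK : IsPd i K K') (hL : IsPd i L L') :
    IsPd i (K * L) (K' * L + K * L') := by
  intro z
  have h := HasDerivAt.mul (hK z) (hL z)
  simp only [zero_smul, add_zero] at h
  exact h

lemma IsPd.sub {i : Fin 3} {K K' L L' : E3 →ᵇ ℝ} (hK : IsPd i K K') (hL : IsPd i L L') :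
    IsPd i (K - L) (K' - L') := fun z => HasDerivAt.sub (hK z) (hL z)

lemma IsPd.smul {i : Fin 3} {K K' : E3 →ᵇ ℝ} (c : ℝ) (hK : IsPd i K K') :
    IsPd i (c • K) (c • K') := fun z => HasDerivAt.const_smul c (hK z)

lemma IsPd.congr {i : Fin 3} {K K' L' : E3 →ᵇ ℝ} (hK : IsPd i K K') (h : ∀ z, K' z = L' z) :
    IsPd i K L' := fun z => h z ▸ hK z

lemma isPd_qB {ε : ℝ} (hε : 0 < ε) (i : Fin 3) :
    IsPd i (qB hε) (-(pB hε i * qB hε * qB hε)) := by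
  intro z
  have hpos : (0 : ℝ) < ε ^ 2 + ‖z‖ ^ 2 := by positivity
  have hn : ∀ t : ℝ, ‖z + t • (EuclideanSpace.single i 1 : E3)‖ ^ 2
      = ‖z‖ ^ 2 + 2 * z i * t + t ^ 2 := by
    intro t
    rw [norm_add_sq_real, inner_smul_right, norm_smul, EuclideanSpace.inner_single_right]
    simp
    ring
  have h1 : HasDerivAt (fun t : ℝ => ε ^ 2 + (‖z‖ ^ 2 + 2 * z i * t + t ^ 2)) (2 * z i) 0 := by
    have := ((((hasDerivAt_id (0 : ℝ)).const_mul (2 * z i)).const_add (‖z‖ ^ 2)).add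
      ((hasDerivAt_id (0 : ℝ)).pow 2)).const_add (ε ^ 2)
    refine this.congr_deriv ?_
    simp
  have h2 := (h1.sqrt (by simpa using hpos.ne')).inv (by simpa using (Real.sqrt_pos.2 hpos).ne')
  unfold HasLineDerivAt
  have e : (fun t : ℝ => qB hε (z + t • (EuclideanSpace.single i 1 : E3)))
      = fun t => (√(ε ^ 2 + (‖z‖ ^ 2 + 2 * z i * t + t ^ 2)))⁻¹ := by
    ext t
    rw [qB_apply, qf, hn]
  rw [e]
  refine h2.congr_deriv ?_
  have hs := (Real.sqrt_pos.2 hpos).ne'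
  simp [qB_apply, pB_apply, qf]
  field_simp

lemma isPd_pB {ε : ℝ} (hε : 0 < ε) (i j : Fin 3) :
    IsPd i (pB hε j) ((if i = j then (1 : ℝ) else 0) • qB hε - pB hε i * pB hε j * qB hε) := by
  intro z
  have h1 : HasDerivAt (fun t : ℝ => (z + t • (EuclideanSpace.single i 1 : E3)) j)
      (if i = j then (1 : ℝ) else 0) 0 := by
    have := ((hasDerivAt_id (0 : ℝ)).mul_const ((EuclideanSpace.single i 1 : E3) j)).const_add (z j)
    refine this.congr_deriv ?_
    simp [eq_comm]
  have h := h1.mul (isPd_qB hε i z)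
  refine HasDerivAt.congr_deriv (f := fun t : ℝ => (z + t • (EuclideanSpace.single i 1 : E3)) j *
    qf ε (z + t • (EuclideanSpace.single i 1 : E3))) h ?_
  by_cases hij : i = j <;> simp [qB_apply, pB_apply, hij] <;> ring

lemma integrable_bdd (K : E3 →ᵇ ℝ) (u : SchwartzMap E3 ℝ) (v : E3) :
    Integrable (fun z => K z * u (v - z)) :=
  (u.integrable.comp_sub_left v).bdd_mul K.continuous.aestronglyMeasurable
    (ae_of_all _ K.norm_coe_le_norm)

/-- Moving a derivative from `u(v - ·)` to the kernel. -/
lemma integral_parts {i : Fin 3} {K K' : E3 →ᵇ ℝ} (hK : IsPd i K K') (u : SchwartzMap E3 ℝ)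
    (v : E3) : ∫ z, K z * dS i u (v - z) = ∫ z, K' z * u (v - z) := by
  have hg : ∀ z, HasLineDerivAt ℝ (fun z => u (v - z)) (-dS i u (v - z)) z
      (EuclideanSpace.single i 1) := by
    intro z
    have h1 : HasFDerivAt u (fderiv ℝ u (v - z)) (v - z) := u.differentiableAt.hasFDerivAt
    have h2 := (h1.comp z ((hasFDerivAt_id z).const_sub v)).hasLineDerivAt
      (EuclideanSpace.single i 1)
    refine HasDerivAt.congr_deriv h2 ?_
    rw [coe_dS]
    simp [pd]
  have h := integral_bilinear_hasLineDerivAt_right_eq_neg_left_of_integrable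
    (μ := (volume : Measure E3)) (B := ContinuousLinearMap.mul ℝ ℝ) (f := K) (f' := K')
    (g := fun z => u (v - z)) (g' := fun z => -dS i u (v - z)) (v := EuclideanSpace.single i 1)
    (integrable_bdd K' u v) (by simpa using (integrable_bdd K (dS i u) v).neg)
    (integrable_bdd K u v) (fun z _ => hK z) (fun z _ => hg z)
  simpa [integral_neg] using h

/-- The identity `∂_i ∂_j a^ε_ij = Δ² √(ε² + |z|²) = -15 ε⁴ (ε² + |z|²)^{-7/2}`, tested against
a Schwartz function. -/
lemma regularized_identity {ε : ℝ} (hε : 0 < ε) (u : SchwartzMap E3 ℝ) (v : E3) :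
    ∑ i : Fin 3, ∑ j : Fin 3, ∫ z, aE ε i j z * dS i (dS j u) (v - z)
      = -15 * ∫ z, ε ^ 4 * qf ε z ^ 7 * u (v - z) := by
  set q := qB hε
  set p := pB hε
  have hq := isPd_qB hε
  have hp := isPd_pB hε
  let δ : Fin 3 → Fin 3 → ℝ := fun i j => if i = j then 1 else 0
  let a : Fin 3 → Fin 3 → E3 →ᵇ ℝ := fun i j => δ i j • q - p i * p j * q
  let b : Fin 3 → E3 →ᵇ ℝ := fun j => (-2 : ℝ) • (p j * (q * q))
    - (3 * ε ^ 2) • (p j * ((q * q) * (q * q)))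
  have hS : ∀ z, p 0 z ^ 2 + p 1 z ^ 2 + p 2 z ^ 2 = 1 - ε ^ 2 * q z ^ 2 := by
    intro z
    have h := qf_sq hε z
    rw [EuclideanSpace.norm_sq_eq, Fin.sum_univ_three] at h
    simp only [Real.norm_eq_abs, sq_abs] at h
    simp only [p, q, pB_apply, qB_apply]
    linear_combination h
  have ha : ∀ i j, ∃ a', IsPd i (a i j) a' ∧ ∀ z, a' z =
      - δ i j * (p i z * q z ^ 2) - (q z - p i z ^ 2 * q z) * p j z * q z
        - p i z * (δ i j * q z - p i z * p j z * q z) * q z + p i z * p j z * p i z * q z ^ 2 := by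
    intro i j
    refine ⟨_, ((hq i).smul (δ i j)).sub (((hp i i).mul (hp i j)).mul (hq i)), fun z => ?_⟩
    by_cases hij : i = j <;> simp [δ, p, q, hij] <;> ring
  choose a' ha ha' using ha
  have hb : ∀ j, ∃ b', IsPd j (b j) b' ∧ ∀ z, b' z =
      -2 * (q z - p j z ^ 2 * q z) * q z ^ 2 + 4 * p j z ^ 2 * q z ^ 3
        - 3 * ε ^ 2 * (q z - p j z ^ 2 * q z) * q z ^ 4 + 12 * ε ^ 2 * p j z ^ 2 * q z ^ 5 := by
    intro j
    have hqq := (hq j).mul (hq j)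
    refine ⟨_, (((hp j j).mul hqq).smul (-2)).sub
      (((hp j j).mul (hqq.mul hqq)).smul (3 * ε ^ 2)), fun z => ?_⟩
    simp [p, q]
    ring
  choose b' hb hb' using hb
  have step1 : ∀ i j, ∫ z, aE ε i j z * dS i (dS j u) (v - z)
      = ∫ z, a' i j z * dS j u (v - z) := fun i j => by
    rw [← integral_parts (ha i j)]
    rfl
  have step2 : ∀ j, ∑ i, ∫ z, a' i j z * dS j u (v - z) = ∫ z, b' j z * u (v - z) := fun j => by
    rw [← integral_parts (hb j), ← integral_finsetSum _ fun i _ => integrable_bdd _ _ _]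
    refine integral_congr_ae (ae_of_all _ fun z => ?_)
    simp only
    rw [← Finset.sum_mul]
    congr 1
    simp only [ha', Fin.sum_univ_three, b, δ]
    have h := hS z
    fin_cases j <;> simp
    · linear_combination (3 * p 0 z * q z ^ 2) * h
    · linear_combination (3 * p 1 z * q z ^ 2) * h
    · linear_combination (3 * p 2 z * q z ^ 2) * h
  simp only [step1]
  rw [Finset.sum_comm]
  simp only [step2]
  rw [← integral_finsetSum _ fun i _ => integrable_bdd _ _ _, ← integral_const_mul]
  refine integral_congr_ae (ae_of_all _ fun z => ?_)
  simp only
  rw [← Finset.sum_mul, ← mul_assoc]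
  congr 1
  simp only [hb', Fin.sum_univ_three]
  have h := hS z
  change _ = -15 * (ε ^ 4 * q z ^ 7)
  linear_combination (6 * q z ^ 3 + 15 * ε ^ 2 * q z ^ 5) * h

lemma integrable_qf_pow : Integrable (fun z : E3 => qf 1 z ^ 7) := by
  refine integrable_jap.mono' ((continuous_qf one_pos).pow 7).aestronglyMeasurable
    (ae_of_all _ fun z => ?_)
  have e : qf 1 z = (jap z)⁻¹ := by simp [qf, jap]
  rw [e, Real.norm_of_nonneg (by have := jap_pos z; positivity), ← Real.rpow_natCast,
    ← Real.rpow_neg_one, ← Real.rpow_mul (jap_pos z).le]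
  exact Real.rpow_le_rpow_of_exponent_le (one_le_jap z) (by norm_num)

/-- The mass of `-∂_i ∂_j a_ij`, numerically `8π`. -/
noncomputable def c₀ : ℝ := 15 * ∫ z : E3, qf 1 z ^ 7

lemma c₀_pos : 0 < c₀ := by
  refine mul_pos (by norm_num) ?_
  refine integral_pos_of_integrable_nonneg_nonzero (x := (0 : E3)) ((continuous_qf one_pos).pow 7)
    integrable_qf_pow (fun z => pow_nonneg (qf_nonneg 1 z) 7) ?_
  simp [qf]

lemma qf_le_inv_norm {ε : ℝ} {z : E3} (hz : z ≠ 0) : qf ε z ≤ ‖z‖⁻¹ := by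
  have := norm_pos_iff.2 hz
  unfold qf
  gcongr
  exact Real.le_sqrt_of_sq_le (by nlinarith [sq_nonneg ε])

lemma abs_aE_le {ε : ℝ} (hε : 0 < ε) (i j : Fin 3) {z : E3} (hz : z ≠ 0) :
    |aE ε i j z| ≤ 2 * ‖z‖⁻¹ := by
  have h1 : |(if i = j then (1 : ℝ) else 0)| ≤ 1 := by split_ifs <;> simp
  have h2 : |(z i * qf ε z) * (z j * qf ε z)| ≤ 1 := by
    rw [abs_mul]
    exact mul_le_one₀ (abs_coord_mul_qf_le hε i z) (abs_nonneg _) (abs_coord_mul_qf_le hε j z)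
  have h3 : aE ε i j z = ((if i = j then 1 else 0) - (z i * qf ε z) * (z j * qf ε z)) * qf ε z := by
    unfold aE; ring
  rw [h3, abs_mul, abs_of_nonneg (qf_nonneg ε z)]
  refine mul_le_mul ?_ (qf_le_inv_norm hz) (qf_nonneg ε z) (by norm_num)
  exact (abs_sub _ _).trans (by linarith)

lemma tendsto_aE (i j : Fin 3) {z : E3} (hz : z ≠ 0) :
    Filter.Tendsto (fun ε => aE ε i j z) (𝓝[>] (0 : ℝ)) (𝓝 (aK z i j)) := by
  have hn := norm_pos_iff.2 hz
  have h1 : ContinuousAt (fun ε => qf ε z) 0 := by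
    unfold qf
    refine ContinuousAt.inv₀ (by fun_prop) ?_
    positivity
  have h2 : ContinuousAt (fun ε => aE ε i j z) 0 := by
    unfold aE; fun_prop
  have e : aE 0 i j z = aK z i j := by
    simp only [aE, aK, Pi3, Matrix.of_apply, qf]
    rw [zero_pow two_ne_zero, zero_add, Real.sqrt_sq hn.le]
    field_simp
  rw [← e]
  exact h2.tendsto.mono_left nhdsWithin_le_nhds

/-- The distributional identity `∂_i ∂_j a_ij = -c₀ δ₀`. -/
lemma sum_Aop_eq (u : SchwartzMap E3 ℝ) (v : E3) :
    ∑ i : Fin 3, ∑ j : Fin 3, Aop i j (dS i (dS j u)) v = -c₀ * u v := by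
  have hne : ∀ᵐ z : E3, z ≠ 0 := by
    simp [ae_iff]
  have hpos : ∀ᶠ ε in 𝓝[>] (0 : ℝ), 0 < ε := self_mem_nhdsWithin
  have hL : Filter.Tendsto (fun ε => ∑ i : Fin 3, ∑ j : Fin 3,
      ∫ z, aE ε i j z * dS i (dS j u) (v - z)) (𝓝[>] (0 : ℝ))
      (𝓝 (∑ i : Fin 3, ∑ j : Fin 3, Aop i j (dS i (dS j u)) v)) := by
    refine tendsto_finsetSum _ fun i _ => tendsto_finsetSum _ fun j _ => ?_
    obtain ⟨C, hC, h⟩ := shifted_bound (dS i (dS j u)) v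
    refine tendsto_integral_filter_of_dominated_convergence
      (fun z => 2 * C * (‖z‖⁻¹ * ((1 + ‖z‖) ^ 4)⁻¹)) ?_ ?_
      (integrable_majorant.const_mul (2 * C)) ?_
    · filter_upwards [hpos] with ε hε
      refine Continuous.aestronglyMeasurable ?_
      have := continuous_qf hε
      have := continuous_coord i
      have := continuous_coord j
      have := (dS i (dS j u)).continuous
      unfold aE
      fun_prop
    · filter_upwards [hpos] with ε hε
      filter_upwards [hne] with z hz
      rw [norm_mul, Real.norm_eq_abs]
      calc _ ≤ (2 * ‖z‖⁻¹) * (C * ((1 + ‖z‖) ^ 4)⁻¹) :=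
            mul_le_mul (abs_aE_le hε i j hz) (h v (Metric.mem_ball_self one_pos) z)
              (norm_nonneg _) (by positivity)
        _ = _ := by ring
    · filter_upwards [hne] with z hz
      exact (tendsto_aE i j hz).mul_const _
  have hR : Filter.Tendsto (fun ε : ℝ => -15 * ∫ y, qf 1 y ^ 7 * u (v - ε • y)) (𝓝[>] (0 : ℝ))
      (𝓝 (-15 * ∫ y, qf 1 y ^ 7 * u v)) := by
    obtain ⟨C, hC, h⟩ := exists_decay u 0
    refine Filter.Tendsto.const_mul _ (tendsto_integral_filter_of_dominated_convergence
      (fun y => qf 1 y ^ 7 * C) ?_ ?_ (integrable_qf_pow.mul_const C) ?_)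
    · refine Filter.Eventually.of_forall fun ε => Continuous.aestronglyMeasurable ?_
      have := continuous_qf one_pos
      have := u.continuous
      fun_prop
    · refine Filter.Eventually.of_forall fun ε => ae_of_all _ fun y => ?_
      rw [norm_mul, Real.norm_of_nonneg (pow_nonneg (qf_nonneg 1 y) 7)]
      have := h (v - ε • y)
      rw [Real.rpow_zero, mul_one] at this
      exact mul_le_mul_of_nonneg_left this (pow_nonneg (qf_nonneg 1 y) 7)
    · refine ae_of_all _ fun y => Filter.Tendsto.const_mul _ ?_
      have hc : Continuous (fun ε : ℝ => u (v - ε • y)) := by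
        have := u.continuous
        fun_prop
      simpa using (hc.tendsto 0).mono_left (nhdsWithin_le_nhds (s := Set.Ioi 0))
  -- The substitution `z = ε y` shows that the two families coincide.
  have hE : (fun ε => ∑ i : Fin 3, ∑ j : Fin 3, ∫ z, aE ε i j z * dS i (dS j u) (v - z))
      =ᶠ[𝓝[>] (0 : ℝ)] fun ε : ℝ => -15 * ∫ y, qf 1 y ^ 7 * u (v - ε • y) := by
    filter_upwards [hpos] with ε hε
    rw [regularized_identity hε]
    congr 1
    have hs := Measure.integral_comp_smul (volume : Measure E3)
      (fun z => ε ^ 4 * qf ε z ^ 7 * u (v - z)) ε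
    have hq : ∀ y : E3, qf ε (ε • y) = ε⁻¹ * qf 1 y := by
      intro y
      unfold qf
      rw [norm_smul, Real.norm_of_nonneg hε.le, mul_pow,
        show ε ^ 2 + ε ^ 2 * ‖y‖ ^ 2 = ε ^ 2 * (1 ^ 2 + ‖y‖ ^ 2) by ring,
        Real.sqrt_mul (by positivity), Real.sqrt_sq hε.le, mul_inv]
    have h3 : Module.finrank ℝ E3 = 3 := by simp
    rw [h3, abs_of_pos (by positivity), smul_eq_mul] at hs
    have hs' : ∫ z, ε ^ 4 * qf ε z ^ 7 * u (v - z)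
        = ε ^ 3 * ∫ y : E3, ε ^ 4 * qf ε (ε • y) ^ 7 * u (v - ε • y) := by
      rw [hs]; field_simp
    rw [hs', ← integral_const_mul]
    refine integral_congr_ae (ae_of_all _ fun y => ?_)
    simp only [hq]
    field_simp
  have := tendsto_nhds_unique (hL.congr' hE) hR
  rw [this, integral_mul_const, c₀]
  ring

/-! ### Pointwise bounds -/

lemma integrable_inv_norm_mul (u : SchwartzMap E3 ℝ) (v : E3) :
    Integrable (fun z => ‖z‖⁻¹ * |u (v - z)|) := by
  obtain ⟨C, hC, h⟩ := shifted_bound u v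
  refine (integrable_majorant.const_mul C).mono' ?_ (ae_of_all _ fun z => ?_)
  · have := u.continuous
    exact measurable_norm.inv.aestronglyMeasurable.mul
      (Continuous.aestronglyMeasurable (by fun_prop))
  · rw [Real.norm_of_nonneg (by positivity)]
    calc ‖z‖⁻¹ * |u (v - z)| ≤ ‖z‖⁻¹ * (C * ((1 + ‖z‖) ^ 4)⁻¹) := by
          gcongr
          exact h v (Metric.mem_ball_self one_pos) z
      _ = _ := by ring

/-- Near the diagonal, `|z|⁻¹` is square integrable and the weights are comparable. -/
lemma local_bound {l : ℝ} (hl : 0 ≤ l) : ∃ C, 0 ≤ C ∧ ∀ (u : SchwartzMap E3 ℝ) (v : E3),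
    (∫ z in Metric.ball 0 1, ‖z‖⁻¹ * |u (v - z)|) * jap v ^ l ≤ C * Lpl 2 l u := by
  refine ⟨2 ^ l * √(∫ z in Metric.ball (0 : E3) 1, (‖z‖⁻¹) ^ 2), by positivity, fun u v => ?_⟩
  have hm : MemLp (fun z : E3 => |u (v - z)| * jap (v - z) ^ l) 2 volume :=
    (memLp_weight u l).comp_measurePreserving (Measure.measurePreserving_sub_left volume v)
  have hk : MemLp (fun z : E3 => ‖z‖⁻¹) 2 (volume.restrict (Metric.ball 0 1)) :=
    (memLp_two_iff_integrable_sq measurable_norm.inv.aestronglyMeasurable).2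
      integrableOn_inv_norm_sq
  have hw0 : ∀ z, 0 ≤ |u (v - z)| * jap (v - z) ^ l := fun z => weight_nonneg u l (v - z)
  have hcs := cauchy_schwarz (μ := volume.restrict (Metric.ball 0 1))
    (fun z => inv_nonneg.2 (norm_nonneg z)) hw0 hk (hm.restrict _)
  have hKint : Integrable (fun z : E3 => ‖z‖⁻¹ * (|u (v - z)| * jap (v - z) ^ l))
      (volume.restrict (Metric.ball 0 1)) := MemLp.integrable_mul hk (hm.restrict _)
  have h2 : √(∫ z in Metric.ball (0 : E3) 1, (|u (v - z)| * jap (v - z) ^ l) ^ 2) ≤ Lpl 2 l u := by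
    rw [Lpl_two]
    refine Real.sqrt_le_sqrt ?_
    rw [← integral_sub_left_eq_self (μ := volume) (fun x => (|u x| * jap x ^ l) ^ 2) v]
    exact setIntegral_le_integral hm.integrable_sq (ae_of_all _ fun z => sq_nonneg _)
  have h1 : (∫ z in Metric.ball (0 : E3) 1, ‖z‖⁻¹ * |u (v - z)|) * jap v ^ l
      ≤ 2 ^ l * ∫ z in Metric.ball (0 : E3) 1, ‖z‖⁻¹ * (|u (v - z)| * jap (v - z) ^ l) := by
    rw [← integral_mul_const, ← integral_const_mul]
    refine setIntegral_mono_on ((integrable_inv_norm_mul u v).integrableOn.mul_const _)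
      (hKint.const_mul _) measurableSet_ball fun z hz => ?_
    have hz' : ‖z‖ ≤ 1 := (mem_ball_zero_iff.1 hz).le
    have hj : jap v ^ l ≤ 2 ^ l * jap (v - z) ^ l := by
      rw [← Real.mul_rpow (by norm_num) (jap_pos _).le]
      exact Real.rpow_le_rpow (jap_pos v).le (jap_le_two_mul hz') hl
    calc ‖z‖⁻¹ * |u (v - z)| * jap v ^ l
        ≤ ‖z‖⁻¹ * |u (v - z)| * (2 ^ l * jap (v - z) ^ l) := by gcongr
      _ = _ := by ring
  calc _ ≤ _ := h1
    _ ≤ 2 ^ l * (√(∫ z in Metric.ball (0 : E3) 1, (‖z‖⁻¹) ^ 2) * Lpl 2 l u) := by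
        gcongr
        exact hcs.trans (by gcongr)
    _ = _ := by ring

lemma abs_Aop_le (i j : Fin 3) (u : SchwartzMap E3 ℝ) (v : E3) :
    |Aop i j u v| ≤ 2 * ∫ z, ‖z‖⁻¹ * |u (v - z)| := by
  unfold Aop
  rw [← integral_const_mul]
  refine (abs_integral_le_integral_abs).trans (integral_mono (integrable_kernel_mul u v i j).abs
    ((integrable_inv_norm_mul u v).const_mul 2) fun z => ?_)
  simp only [abs_mul]
  calc _ ≤ (2 * ‖z‖⁻¹) * |u (v - z)| := by gcongr; exact abs_aK_le z i j
    _ = _ := by ring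

/-- The diffusion coefficients decay like `⟨v⟩⁻¹`. -/
lemma Aop_bound : ∃ C, 0 ≤ C ∧ ∀ (i j : Fin 3) (g : SchwartzMap E3 ℝ) (v : E3),
    |Aop i j g v| * jap v ≤ C * (Lpl 1 2 g + Lpl 2 2 g) := by
  obtain ⟨C, hC, h⟩ := local_bound (l := 2) (by norm_num)
  refine ⟨2 * (C + 2), by positivity, fun i j g v => ?_⟩
  have hi := integrable_inv_norm_mul g v
  have hw : Integrable (fun z => |g (v - z)| * jap (v - z) ^ (2 : ℝ)) :=
    (integrable_weight g 2).comp_sub_left v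
  have hsplit := integral_add_compl (s := Metric.ball (0 : E3) 1) measurableSet_ball hi
  have hjj : ∀ x, jap x ≤ jap x ^ (2 : ℝ) := fun x => by
    rw [Real.rpow_two]; nlinarith [one_le_jap x]
  have hnear : (∫ z in Metric.ball (0 : E3) 1, ‖z‖⁻¹ * |g (v - z)|) * jap v ≤ C * Lpl 2 2 g :=
    le_trans (mul_le_mul_of_nonneg_left (hjj v) (integral_nonneg fun z => by positivity)) (h g v)
  have hfar : (∫ z in (Metric.ball (0 : E3) 1)ᶜ, ‖z‖⁻¹ * |g (v - z)|) * jap v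
      ≤ 2 * Lpl 1 2 g := by
    rw [Lpl_one, ← integral_sub_left_eq_self (μ := volume) (fun x => |g x| * jap x ^ (2 : ℝ)) v,
      ← integral_mul_const]
    calc _ ≤ ∫ z in (Metric.ball (0 : E3) 1)ᶜ, 2 * (|g (v - z)| * jap (v - z) ^ (2 : ℝ)) := by
          refine setIntegral_mono_on (hi.integrableOn.mul_const _) (hw.integrableOn.const_mul _)
            measurableSet_ball.compl fun z hz => ?_
          have hz' : 1 ≤ ‖z‖ := by simpa using hz
          have hz0 : 0 < ‖z‖ := by linarith
          calc ‖z‖⁻¹ * |g (v - z)| * jap v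
              ≤ ‖z‖⁻¹ * |g (v - z)| * (2 * (jap (v - z) ^ (2 : ℝ) * ‖z‖)) := by
                gcongr
                refine (jap_le_two_mul_mul hz').trans ?_
                gcongr
                exact hjj _
            _ = _ := by field_simp
      _ ≤ ∫ z, 2 * (|g (v - z)| * jap (v - z) ^ (2 : ℝ)) :=
          setIntegral_le_integral (hw.const_mul _)
            (ae_of_all _ fun z => mul_nonneg zero_le_two (weight_nonneg g 2 (v - z)))
      _ = _ := integral_const_mul _ _
  have h1 := Lpl_nonneg 1 2 g
  have h2 := Lpl_nonneg 2 2 g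
  calc |Aop i j g v| * jap v ≤ (2 * ∫ z, ‖z‖⁻¹ * |g (v - z)|) * jap v :=
        mul_le_mul_of_nonneg_right (abs_Aop_le i j g v) (jap_pos v).le
    _ = 2 * ((∫ z in Metric.ball (0 : E3) 1, ‖z‖⁻¹ * |g (v - z)|) * jap v
        + (∫ z in (Metric.ball (0 : E3) 1)ᶜ, ‖z‖⁻¹ * |g (v - z)|) * jap v) := by
        rw [← hsplit]; ring
    _ ≤ 2 * (C * Lpl 2 2 g + 2 * Lpl 1 2 g) := by gcongr
    _ ≤ _ := by nlinarith [mul_nonneg hC h1]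

/-! ### The Sobolev norm and the embedding `H² ⊂ L^∞` -/

lemma dS_comm (i j : Fin 3) (f : SchwartzMap E3 ℝ) : dS i (dS j f) = dS j (dS i f) := by
  ext x
  have hd : DifferentiableAt ℝ (fderiv ℝ f) x :=
    (SchwartzMap.fderivCLM ℝ E3 ℝ f).differentiableAt
  have h : ∀ i j : Fin 3, dS i (dS j f) x
      = fderiv ℝ (fderiv ℝ f) x (EuclideanSpace.single i 1) (EuclideanSpace.single j 1) := by
    intro i j
    rw [coe_dS, coe_dS]
    unfold pd
    have := (hd.hasFDerivAt.clm_apply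
      (hasFDerivAt_const (EuclideanSpace.single j 1 : E3) x)).fderiv
    rw [this]
    simp
  rw [h, h]
  have hs : IsSymmSndFDerivAt ℝ f x :=
    (f.smooth 2).contDiffAt.isSymmSndFDerivAt (by simp)
  exact hs _ _

lemma Lpl_pdM_le {n : ℕ} (l : ℝ) {m : Fin 3 → ℕ} (hm : m ∈ multiIdx n) (f : E3 → ℝ) :
    Lpl 2 l (pdM m f) ≤ HSob n l f := by
  refine Real.le_sqrt_of_sq_le ?_
  exact Finset.single_le_sum (f := fun m => Lpl 2 l (pdM m f) ^ 2)
    (fun _ _ => sq_nonneg _) hm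

lemma Lpl_le_HSob (l : ℝ) (f : SchwartzMap E3 ℝ) : Lpl 2 l f ≤ HSob 2 l f :=
  Lpl_pdM_le (m := ![0, 0, 0]) l (by decide) f

lemma Lpl_dS_le_HSob (l : ℝ) (i : Fin 3) (f : SchwartzMap E3 ℝ) :
    Lpl 2 l (dS i f) ≤ HSob 2 l f := by
  simp only [coe_dS]
  fin_cases i
  · exact Lpl_pdM_le (m := ![1, 0, 0]) l (by decide) f
  · exact Lpl_pdM_le (m := ![0, 1, 0]) l (by decide) f
  · exact Lpl_pdM_le (m := ![0, 0, 1]) l (by decide) f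

lemma Lpl_dS_dS_le_HSob (l : ℝ) (i j : Fin 3) (f : SchwartzMap E3 ℝ) :
    Lpl 2 l (dS i (dS j f)) ≤ HSob 2 l f := by
  wlog hij : i ≤ j generalizing i j
  · rw [dS_comm]
    exact this j i (le_of_not_ge hij)
  simp only [coe_dS]
  fin_cases i <;> fin_cases j <;> simp at hij
  · exact Lpl_pdM_le (m := ![2, 0, 0]) l (by decide) f
  · exact Lpl_pdM_le (m := ![1, 1, 0]) l (by decide) f
  · exact Lpl_pdM_le (m := ![1, 0, 1]) l (by decide) f
  · exact Lpl_pdM_le (m := ![0, 2, 0]) l (by decide) f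
  · exact Lpl_pdM_le (m := ![0, 1, 1]) l (by decide) f
  · exact Lpl_pdM_le (m := ![0, 0, 2]) l (by decide) f

lemma exists_cutoff : ∃ X : SchwartzMap E3 ℝ, X 0 = 1 ∧
    tsupport X ⊆ Metric.ball 0 1 ∧ HasCompactSupport X := by
  let b : ContDiffBump (0 : E3) := ⟨1 / 4, 1 / 2, by norm_num, by norm_num⟩
  refine ⟨b.hasCompactSupport.toSchwartzMap b.contDiff, ?_, ?_, b.hasCompactSupport⟩
  · exact b.one_of_mem_closedBall (Metric.mem_closedBall_self (by norm_num))
  · change tsupport b ⊆ _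
    rw [b.tsupport_eq]
    exact Metric.closedBall_subset_ball (by norm_num)

lemma tsupport_dS_subset (i : Fin 3) (X : SchwartzMap E3 ℝ) : tsupport (dS i X) ⊆ tsupport X :=
  SchwartzMap.tsupport_lineDerivOp_subset _ X

lemma exists_bump_bound (Y : SchwartzMap E3 ℝ) (h : tsupport Y ⊆ Metric.ball 0 1) :
    ∃ C, 0 ≤ C ∧ ∀ z, |Y (-z)| ≤ (Metric.ball (0 : E3) 1).indicator (fun _ => C) z := by
  obtain ⟨C, hC, hY⟩ := exists_decay Y 0
  refine ⟨C, hC, fun z => ?_⟩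
  by_cases hz : z ∈ Metric.ball (0 : E3) 1
  · rw [Set.indicator_of_mem hz]
    simpa using hY (-z)
  · have : Y (-z) = 0 := by
      refine image_eq_zero_of_notMem_tsupport fun hm => hz ?_
      simpa using h hm
    rw [Set.indicator_of_notMem hz, this, abs_zero]

lemma hasFDerivAt_shift_mul (X f : SchwartzMap E3 ℝ) (v x : E3) :
    HasFDerivAt (fun x => X (x - v) * f x)
      (X (x - v) • fderiv ℝ f x + f x • fderiv ℝ X (x - v)) x := by
  have h1 : HasFDerivAt X (fderiv ℝ X (x - v)) (x - v) := X.differentiableAt.hasFDerivAt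
  have h2 := h1.comp x ((hasFDerivAt_id x).sub_const v)
  exact HasFDerivAt.mul h2 f.differentiableAt.hasFDerivAt

/-- Weighted Sobolev embedding: the fundamental solution identity applied to `f` times a cutoff
around `v` represents `f v` by an integral over the unit ball around `v`. -/
lemma sobolev_bound {l : ℝ} (hl : 0 ≤ l) : ∃ C, 0 ≤ C ∧ ∀ (f : SchwartzMap E3 ℝ) (v : E3),
    |f v| * jap v ^ l ≤ C * HSob 2 l f := by
  obtain ⟨X, hX0, hXs, hXc⟩ := exists_cutoff
  obtain ⟨K, hK, hloc⟩ := local_bound hl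
  have hs1 : ∀ i, tsupport (dS i X) ⊆ Metric.ball 0 1 := fun i => (tsupport_dS_subset i X).trans hXs
  have hs2 : ∀ i j, tsupport (dS i (dS j X)) ⊆ Metric.ball 0 1 := fun i j =>
    (tsupport_dS_subset i _).trans (hs1 j)
  obtain ⟨M₀, hM₀, hb0⟩ := exists_bump_bound X hXs
  choose M₁ hM₁ hb1 using fun i => exists_bump_bound (dS i X) (hs1 i)
  choose M₂ hM₂ hb2 using fun i j => exists_bump_bound (dS i (dS j X)) (hs2 i j)
  refine ⟨c₀⁻¹ * ∑ i : Fin 3, ∑ j : Fin 3, 2 * (M₂ i j + M₁ j + M₁ i + M₀) * K, ?_,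
    fun f v => ?_⟩
  · have := c₀_pos
    refine mul_nonneg (by positivity) (Finset.sum_nonneg fun i _ => Finset.sum_nonneg fun j _ => ?_)
    have := hM₁ i
    have := hM₁ j
    have := hM₂ i j
    positivity
  have hcs : HasCompactSupport (fun x => X (x - v) * f x) :=
    HasCompactSupport.mul_right (hXc.comp_homeomorph (Homeomorph.subRight v))
  have hcd : ContDiff ℝ (⊤ : ℕ∞) (fun x => X (x - v) * f x) := by
    have h1 := X.smooth ⊤
    have h2 := f.smooth ⊤
    fun_prop
  let φ : SchwartzMap E3 ℝ := hcs.toSchwartzMap hcd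
  have hφ1 : ∀ j, ⇑(dS j φ) = fun x => dS j X (x - v) * f x + X (x - v) * dS j f x := by
    intro j
    ext x
    rw [coe_dS, coe_dS, coe_dS]
    change fderiv ℝ (fun x => X (x - v) * f x) x _ = _
    rw [(hasFDerivAt_shift_mul X f v x).fderiv]
    simp [pd]
    ring
  have hφ2 : ∀ i j x, dS i (dS j φ) x = dS i (dS j X) (x - v) * f x + dS j X (x - v) * dS i f x
      + dS i X (x - v) * dS j f x + X (x - v) * dS i (dS j f) x := by
    intro i j x
    rw [coe_dS, hφ1, coe_dS i (dS j X), coe_dS i f, coe_dS i X, coe_dS i (dS j f)]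
    unfold pd
    have := ((hasFDerivAt_shift_mul (dS j X) f v x).add (hasFDerivAt_shift_mul X (dS j f) v x)).fderiv
    refine (congrArg (fun L : E3 →L[ℝ] ℝ => L (EuclideanSpace.single i 1)) this).trans ?_
    simp
    ring
  have hφv : φ v = f v := by
    change X (v - v) * f v = f v
    rw [sub_self, hX0, one_mul]
  have hid := sum_Aop_eq φ v
  rw [hφv] at hid
  have hterm : ∀ i j, |Aop i j (dS i (dS j φ)) v| * jap v ^ l
      ≤ 2 * (M₂ i j + M₁ j + M₁ i + M₀) * K * HSob 2 l f := by
    intro i j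
    set I : SchwartzMap E3 ℝ → ℝ := fun u => ∫ z in Metric.ball 0 1, ‖z‖⁻¹ * |u (v - z)| with hI
    have hKint : ∀ u : SchwartzMap E3 ℝ, IntegrableOn (fun z => ‖z‖⁻¹ * |u (v - z)|)
      (Metric.ball 0 1) := fun u => (integrable_inv_norm_mul u v).integrableOn
    have hI' : ∀ u : SchwartzMap E3 ℝ, Lpl 2 l u ≤ HSob 2 l f → I u * jap v ^ l ≤ K * HSob 2 l f :=
      fun u hu => (hloc u v).trans (by gcongr)
    have hpt : ∀ z, ‖z‖⁻¹ * |dS i (dS j φ) (v - z)| ≤ (Metric.ball (0 : E3) 1).indicator (fun z =>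
        M₂ i j * (‖z‖⁻¹ * |f (v - z)|) + M₁ j * (‖z‖⁻¹ * |dS i f (v - z)|)
          + M₁ i * (‖z‖⁻¹ * |dS j f (v - z)|) + M₀ * (‖z‖⁻¹ * |dS i (dS j f) (v - z)|)) z := by
      intro z
      have e : v - z - v = -z := by abel
      rw [hφ2, e]
      have b0 := hb0 z
      have b1 := hb1 i z
      have b1' := hb1 j z
      have b2 := hb2 i j z
      by_cases hz : z ∈ Metric.ball (0 : E3) 1
      · simp only [Set.indicator_of_mem hz] at b0 b1 b1' b2 ⊢
        calc _ ≤ ‖z‖⁻¹ * (|dS i (dS j X) (-z)| * |f (v - z)| + |dS j X (-z)| * |dS i f (v - z)|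
                + |dS i X (-z)| * |dS j f (v - z)| + |X (-z)| * |dS i (dS j f) (v - z)|) := by
              simp only [← abs_mul]
              gcongr
              refine (abs_add_le _ _).trans ?_
              gcongr
              exact abs_add_three _ _ _
          _ ≤ ‖z‖⁻¹ * (M₂ i j * |f (v - z)| + M₁ j * |dS i f (v - z)|
                + M₁ i * |dS j f (v - z)| + M₀ * |dS i (dS j f) (v - z)|) := by gcongr
          _ = _ := by ring
      · simp only [Set.indicator_of_notMem hz, abs_nonpos_iff] at b0 b1 b1' b2 ⊢
        simp [b0, b1, b1', b2]
    have hI1 : ∫ z, ‖z‖⁻¹ * |dS i (dS j φ) (v - z)|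
        ≤ M₂ i j * I f + M₁ j * I (dS i f) + M₁ i * I (dS j f) + M₀ * I (dS i (dS j f)) := by
      have ha := (hKint f).const_mul (M₂ i j)
      have hb := (hKint (dS i f)).const_mul (M₁ j)
      have hc := (hKint (dS j f)).const_mul (M₁ i)
      have hd := (hKint (dS i (dS j f))).const_mul M₀
      have hsum := ((ha.add hb).add hc).add hd
      refine (integral_mono (integrable_inv_norm_mul _ v)
        ((integrable_indicator_iff measurableSet_ball).2 hsum) hpt).trans ?_
      rw [integral_indicator measurableSet_ball]
      refine le_of_eq ?_
      refine (integral_add ((ha.add hb).add hc) hd).trans ?_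
      rw [integral_const_mul]
      congr 1
      refine (integral_add (ha.add hb) hc).trans ?_
      rw [integral_const_mul]
      congr 1
      refine (integral_add ha hb).trans ?_
      rw [integral_const_mul, integral_const_mul]
    have hj : 0 ≤ jap v ^ l := Real.rpow_nonneg (jap_pos v).le _
    have i0 := mul_le_mul_of_nonneg_left (hI' f (Lpl_le_HSob l f)) (hM₂ i j)
    have i1 := mul_le_mul_of_nonneg_left (hI' _ (Lpl_dS_le_HSob l i f)) (hM₁ j)
    have i2 := mul_le_mul_of_nonneg_left (hI' _ (Lpl_dS_le_HSob l j f)) (hM₁ i)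
    have i3 := mul_le_mul_of_nonneg_left (hI' _ (Lpl_dS_dS_le_HSob l i j f)) hM₀
    calc _ ≤ (2 * ∫ z, ‖z‖⁻¹ * |dS i (dS j φ) (v - z)|) * jap v ^ l :=
          mul_le_mul_of_nonneg_right (abs_Aop_le i j _ v) hj
      _ ≤ (2 * (M₂ i j * I f + M₁ j * I (dS i f) + M₁ i * I (dS j f)
            + M₀ * I (dS i (dS j f)))) * jap v ^ l := by gcongr
      _ ≤ _ := by linarith
  have hc := c₀_pos
  have hmain : c₀ * (|f v| * jap v ^ l)
      ≤ (∑ i : Fin 3, ∑ j : Fin 3, 2 * (M₂ i j + M₁ j + M₁ i + M₀) * K) * HSob 2 l f := by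
    have e : c₀ * |f v| = |∑ i : Fin 3, ∑ j : Fin 3, Aop i j (dS i (dS j φ)) v| := by
      rw [hid, abs_mul, abs_neg, abs_of_pos hc]
    rw [← mul_assoc, e]
    calc _ ≤ (∑ i : Fin 3, ∑ j : Fin 3, |Aop i j (dS i (dS j φ)) v|) * jap v ^ l := by
          refine mul_le_mul_of_nonneg_right ?_ (Real.rpow_nonneg (jap_pos v).le _)
          exact (Finset.abs_sum_le_sum_abs _ _).trans
            (Finset.sum_le_sum fun i _ => Finset.abs_sum_le_sum_abs _ _)
      _ ≤ _ := by
          simp only [Finset.sum_mul]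
          exact Finset.sum_le_sum fun i _ => Finset.sum_le_sum fun j _ => hterm i j
  rw [mul_assoc, inv_mul_eq_div, le_div_iff₀ hc]
  linarith

/-! ### The estimate -/

/-- The Cauchy-Schwarz inequality with weights. -/
lemma integral_weight_mul_le (u h : SchwartzMap E3 ℝ) (l m : ℝ) :
    ∫ v, (|u v| * jap v ^ l) * (|h v| * jap v ^ m) ≤ Lpl 2 l u * Lpl 2 m h := by
  rw [Lpl_two, Lpl_two]
  exact cauchy_schwarz (weight_nonneg u l) (weight_nonneg h m) (memLp_weight u l) (memLp_weight h m)

lemma integrable_weight_mul (u h : SchwartzMap E3 ℝ) (l m : ℝ) :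
    Integrable (fun v => (|u v| * jap v ^ l) * (|h v| * jap v ^ m)) :=
  MemLp.integrable_mul (memLp_weight u l) (memLp_weight h m)

end LandauBound

open LandauBound in
/-- for `k > 2` there is `C = C(k)` such that for all Schwartz `f, g, h`:
`|⟨Q(g,f), h⟨v⟩^{2k}⟩| ≤ C (‖g‖_{L¹₂}+‖g‖_{L²₂}) ‖f‖_{H²_{k−1}} ‖h‖_{L²_k}`. -/
theorem landau_upper_bound_sobolev (k : ℝ) (hk : 2 < k) :
    ∃ C > 0, ∀ f g h : SchwartzMap E3 ℝ,
      |pairL (landauQ (⇑g) (⇑f)) (fun v => h v * jap v ^ (2 * k))|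
      ≤ C * (Lpl 1 2 (⇑g) + Lpl 2 2 (⇑g)) * HSob 2 (k - 1) (⇑f) * Lpl 2 k (⇑h) := by
  obtain ⟨K₁, hK₁, hA⟩ := Aop_bound
  obtain ⟨K₂, hK₂, hS⟩ := sobolev_bound (l := k - 1) (by linarith)
  have hc := c₀_pos
  refine ⟨9 * K₁ + c₀ * K₂ + 1, by positivity, fun f g h => ?_⟩
  set N := Lpl 1 2 g + Lpl 2 2 g with hN
  set H := HSob 2 (k - 1) f with hH
  have hg1 := Lpl_nonneg 1 2 g
  have hg2 := Lpl_nonneg 2 2 g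
  have hN0 : 0 ≤ N := add_nonneg hg1 hg2
  have hH0 : 0 ≤ H := Real.sqrt_nonneg _
  have hh0 := Lpl_nonneg 2 k h
  -- The integrable majorant of the integrand of the pairing.
  let B₁ : Fin 3 → Fin 3 → E3 → ℝ := fun i j v =>
    (K₁ * N) * ((|dS i (dS j f) v| * jap v ^ (k - 1)) * (|h v| * jap v ^ k))
  let B₂ : E3 → ℝ := fun v =>
    (c₀ * (K₂ * H)) * ((|g v| * jap v ^ (2 : ℝ)) * (|h v| * jap v ^ k))
  have hB₁ : ∀ i j, Integrable (B₁ i j) := fun i j => (integrable_weight_mul _ _ _ _).const_mul _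
  have hB₂ : Integrable B₂ := (integrable_weight_mul _ _ _ _).const_mul _
  have hB : Integrable (fun v => (∑ i, ∑ j, B₁ i j v) + B₂ v) :=
    (integrable_finsetSum _ fun i _ => integrable_finsetSum _ fun j _ => hB₁ i j).add hB₂
  have hpt : ∀ v, |landauQ g f v * (h v * jap v ^ (2 * k))| ≤ (∑ i, ∑ j, B₁ i j v) + B₂ v := by
    intro v
    have hj := jap_pos v
    have hjk : 0 ≤ jap v ^ k := Real.rpow_nonneg hj.le _
    have hjk' : 0 ≤ jap v ^ (k - 1) := Real.rpow_nonneg hj.le _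
    have e1 : jap v ^ (2 * k) = jap v * jap v ^ (k - 1) * jap v ^ k := by
      nth_rewrite 2 [← Real.rpow_one (jap v)]
      rw [← Real.rpow_add hj, ← Real.rpow_add hj]
      ring_nf
    have e2 : jap v ≤ jap v ^ (2 : ℝ) := by
      rw [Real.rpow_two]; nlinarith [one_le_jap v]
    have hQ : |landauQ g f v|
        ≤ (∑ i : Fin 3, ∑ j : Fin 3, |Aop i j g v| * |dS i (dS j f) v|) + c₀ * |g v| * |f v| := by
      rw [landauQ_eq, sum_Aop_eq]
      refine (abs_sub _ _).trans (add_le_add ?_ (le_of_eq ?_))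
      · refine (Finset.abs_sum_le_sum_abs _ _).trans (Finset.sum_le_sum fun i _ => ?_)
        refine (Finset.abs_sum_le_sum_abs _ _).trans (Finset.sum_le_sum fun j _ => ?_)
        rw [abs_mul]
      · rw [abs_mul, abs_mul, abs_neg, abs_of_pos hc]
    rw [abs_mul, abs_mul, abs_of_nonneg (Real.rpow_nonneg hj.le (2 * k)), e1]
    refine (mul_le_mul_of_nonneg_right hQ (by positivity)).trans ?_
    rw [add_mul]
    refine add_le_add ?_ ?_
    · simp only [Finset.sum_mul]
      refine Finset.sum_le_sum fun i _ => Finset.sum_le_sum fun j _ => ?_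
      calc _ = (|Aop i j g v| * jap v) *
            ((|dS i (dS j f) v| * jap v ^ (k - 1)) * (|h v| * jap v ^ k)) := by ring
        _ ≤ _ := mul_le_mul_of_nonneg_right (hA i j g v) (by positivity)
    · calc _ = (c₀ * (|f v| * jap v ^ (k - 1))) * ((|g v| * jap v) * (|h v| * jap v ^ k)) := by
            ring
        _ ≤ _ := by
          refine mul_le_mul ?_ ?_ (by positivity) (by positivity)
          · exact mul_le_mul_of_nonneg_left (hS f v) hc.le
          · gcongr
  have hI₁ : ∀ i j, ∫ v, B₁ i j v ≤ K₁ * N * (H * Lpl 2 k h) := fun i j => by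
    refine (integral_const_mul _ _).trans_le ?_
    refine mul_le_mul_of_nonneg_left ?_ (by positivity)
    exact (integral_weight_mul_le _ _ _ _).trans
      (mul_le_mul_of_nonneg_right (Lpl_dS_dS_le_HSob _ i j f) hh0)
  have hI₂ : ∫ v, B₂ v ≤ c₀ * (K₂ * H) * (N * Lpl 2 k h) := by
    refine (integral_const_mul _ _).trans_le ?_
    refine mul_le_mul_of_nonneg_left ?_ (by positivity)
    exact (integral_weight_mul_le _ _ _ _).trans
      (mul_le_mul_of_nonneg_right (by linarith) hh0)
  unfold pairL
  calc _ ≤ ∫ v, |landauQ g f v * (h v * jap v ^ (2 * k))| := abs_integral_le_integral_abs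
    _ ≤ ∫ v, ((∑ i, ∑ j, B₁ i j v) + B₂ v) :=
        integral_mono_of_nonneg (ae_of_all _ fun v => abs_nonneg _) hB (ae_of_all _ hpt)
    _ = (∑ i, ∑ j, ∫ v, B₁ i j v) + ∫ v, B₂ v := by
        rw [integral_add (integrable_finsetSum _ fun i _ => integrable_finsetSum _ fun j _ =>
          hB₁ i j) hB₂, integral_finsetSum _ fun i _ => integrable_finsetSum _ fun j _ => hB₁ i j]
        congr 1
        exact Finset.sum_congr rfl fun i _ => integral_finsetSum _ fun j _ => hB₁ i j
    _ ≤ (∑ _i : Fin 3, ∑ _j : Fin 3, K₁ * N * (H * Lpl 2 k h))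
          + c₀ * (K₂ * H) * (N * Lpl 2 k h) :=
        add_le_add (Finset.sum_le_sum fun i _ => Finset.sum_le_sum fun j _ => hI₁ i j) hI₂
    _ = (9 * K₁ + c₀ * K₂) * N * H * Lpl 2 k h := by
        simp only [Finset.sum_const, Finset.card_univ, Fintype.card_fin, nsmul_eq_mul]
        push_cast
        ring
    _ ≤ _ := mul_le_mul_of_nonneg_right (mul_le_mul_of_nonneg_right
        (mul_le_mul_of_nonneg_right (by linarith) hN0) hH0) hh0
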